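/- Suppose C_n and D_n are random variables with values in a separable metric space S, C_n is G_n-measurable, D_n is G_∞-measurable, C_n converges stably to a kernel M, and D_n converges stably in the strong sense (with respect to (G_n)) to a kernel N. Then the pair (C_n, D_n) converges stably to the product kernel M × N on S × S. -/

import Mathlib

open MeasureTheory Filter Real
open scoped ENNReal NNReal Topology

/-- `Y n` converges stably to the kernel `N`: for every event `H` of positive
probability, the conditional laws of `Y n` given `H` converge weakly to the
conditional expectation of `N` given `H` (equivalently, in unnormalized form,
`∫_H f(Y n) dμ → ∫_H N(f) dμ` for every bounded continuous `f`). -/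
def StablyTo {Ω : Type*} {m0 : MeasurableSpace Ω} (μ : Measure Ω)
    {S : Type*} [MeasurableSpace S] [TopologicalSpace S]
    (Y : ℕ → Ω → S) (N : Ω → Measure S) : Prop :=
  ∀ H : Set Ω, MeasurableSet H → 0 < μ H →
    ∀ f : BoundedContinuousFunction S ℝ,
      Tendsto (fun n => ∫ ω in H, f (Y n ω) ∂μ) atTop
        (𝓝 (∫ ω in H, ∫ x, f x ∂(N ω) ∂μ))

/-- `Y n` converges to the kernel `N` stably in the strong sense with respect to
the filtration `𝒢`: `E[f(Y n) | 𝒢 n] → N(f)` in probability for every bounded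
continuous `f`. -/
def StablyStrongTo {Ω : Type*} {m0 : MeasurableSpace Ω} (μ : Measure Ω)
    (𝒢 : ℕ → MeasurableSpace Ω)
    {S : Type*} [MeasurableSpace S] [TopologicalSpace S]
    (Y : ℕ → Ω → S) (N : Ω → Measure S) : Prop :=
  ∀ f : BoundedContinuousFunction S ℝ,
    TendstoInMeasure μ (fun n ω => (μ[fun ω' => f (Y n ω')|𝒢 n]) ω) atTop
      (fun ω => ∫ x, f x ∂(N ω))

/-!
Let `W n = E[g (D n) | ℱ n]`. The product `f (C n) * (g (D n) - W n)` is bounded, measurable with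
respect to `⨆ k, ℱ k`, and has zero conditional expectation given `ℱ n`. Against an integrable `X`
it therefore has the same integral as against `E[X | ⨆ k, ℱ k] - E[X | ℱ n]`, which tends to `0`
in `L¹` by Lévy's upward theorem. So `g (D n)` may be replaced by `W n`, which converges to
`N(g)` in `L¹`, and what remains is the stable convergence of `C n` tested against the integrable
weight `1_H * N(g)`.

The functions `f x * g y` determine weak convergence: their span is an algebra, the supports
`{F ≠ 0}` of its `[0, 1]`-valued elements form a base of the product topology, and
`1 - (1 - F) ^ k` increases to the indicator of `{F ≠ 0}` inside the algebra. Hence the convergence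
of their integrals gives the portmanteau bound for open sets.
-/

open ProbabilityTheory
open scoped BoundedContinuousFunction

section BoundedWeights

variable {Ω ι : Type*} {m0 : MeasurableSpace Ω} {μ : Measure Ω} {K : ℝ≥0}

lemma enorm_integral_mul_le_mul_eLpNorm {F R : Ω → ℝ} (hF : ∀ᵐ ω ∂μ, ‖F ω‖ ≤ K) :
    ‖∫ ω, F ω * R ω ∂μ‖ₑ ≤ K * eLpNorm R 1 μ := by
  have hle : eLpNorm (fun ω => F ω * R ω) 1 μ ≤ K • eLpNorm R 1 μ := by
    refine eLpNorm_le_nnreal_smul_eLpNorm_of_ae_le_mul ?_ 1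
    filter_upwards [hF] with ω hω
    rw [nnnorm_mul]
    gcongr
    exact hω
  calc ‖∫ ω, F ω * R ω ∂μ‖ₑ
      ≤ ∫⁻ ω, ‖F ω * R ω‖ₑ ∂μ := enorm_integral_le_lintegral_enorm _
    _ = eLpNorm (fun ω => F ω * R ω) 1 μ := eLpNorm_one_eq_lintegral_enorm.symm
    _ ≤ K * eLpNorm R 1 μ := hle

lemma tendsto_integral_mul_zero_of_tendsto_eLpNorm_zero {l : Filter ι} {F R : ι → Ω → ℝ}
    (hF : ∀ i, ∀ᵐ ω ∂μ, ‖F i ω‖ ≤ K) (hR : Tendsto (fun i => eLpNorm (R i) 1 μ) l (𝓝 0)) :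
    Tendsto (fun i => ∫ ω, F i ω * R i ω ∂μ) l (𝓝 0) := by
  rw [tendsto_zero_iff_enorm_tendsto_zero]
  have hKR : Tendsto (fun i => K * eLpNorm (R i) 1 μ) l (𝓝 0) := by
    simpa only [mul_zero] using ENNReal.Tendsto.const_mul hR (.inr ENNReal.coe_ne_top)
  exact tendsto_of_tendsto_of_tendsto_of_le_of_le tendsto_const_nhds hKR (fun _ => zero_le)
    fun i => enorm_integral_mul_le_mul_eLpNorm (hF i)

lemma unifIntegrable_of_ae_norm_le {F : ι → Ω → ℝ} {p : ℝ≥0∞} (hp : 1 ≤ p) (hp' : p ≠ ∞)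
    (hF : ∀ i, AEStronglyMeasurable (F i) μ) (hK : ∀ i, ∀ᵐ ω ∂μ, ‖F i ω‖ ≤ K) :
    UnifIntegrable F p μ := by
  refine unifIntegrable_of hp hp' hF fun ε _ => ⟨K + 1, fun i => ?_⟩
  have hzero : {ω | K + 1 ≤ ‖F i ω‖₊}.indicator (F i) =ᵐ[μ] 0 := by
    filter_upwards [hK i] with ω hω
    refine Set.indicator_of_notMem (fun hlt => ?_) _
    exact absurd (hlt.trans hω) (by simp)
  rw [eLpNorm_congr_ae hzero, eLpNorm_zero]
  exact zero_le

lemma tendsto_eLpNorm_one_of_tendstoInMeasure [IsFiniteMeasure μ] {F : ℕ → Ω → ℝ} {G : Ω → ℝ}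
    (hF : ∀ n, AEStronglyMeasurable (F n) μ) (hFK : ∀ n, ∀ᵐ ω ∂μ, ‖F n ω‖ ≤ K)
    (hG : MemLp G 1 μ) (h : TendstoInMeasure μ F atTop G) :
    Tendsto (fun n => eLpNorm (F n - G) 1 μ) atTop (𝓝 0) :=
  tendsto_Lp_finite_of_tendstoInMeasure le_rfl ENNReal.one_ne_top hF hG
    (unifIntegrable_of_ae_norm_le le_rfl ENNReal.one_ne_top hF hFK) h

lemma lipschitzWith_integral_mul {F : Ω → ℝ} (hF : AEStronglyMeasurable F μ)
    (hK : ∀ᵐ ω ∂μ, ‖F ω‖ ≤ K) :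
    LipschitzWith K fun X : Ω →₁[μ] ℝ => ∫ ω, F ω * X ω ∂μ := by
  intro X Y
  have hint (Z : Ω →₁[μ] ℝ) : Integrable (fun ω => F ω * Z ω) μ :=
    (L1.integrable_coeFn Z).bdd_mul hF hK
  rw [edist_eq_enorm_sub, ← integral_sub (hint X) (hint Y), Lp.edist_def]
  simp_rw [← mul_sub]
  exact enorm_integral_mul_le_mul_eLpNorm hK

lemma tendsto_integral_mul_of_tendsto_setIntegral {l : Filter ι} {F : ι → Ω → ℝ} {G X : Ω → ℝ}
    (hF : ∀ i, AEStronglyMeasurable (F i) μ) (hFK : ∀ i, ∀ᵐ ω ∂μ, ‖F i ω‖ ≤ K)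
    (hG : AEStronglyMeasurable G μ) (hGK : ∀ᵐ ω ∂μ, ‖G ω‖ ≤ K)
    (h : ∀ s, MeasurableSet s → μ s < ∞ →
      Tendsto (fun i => ∫ ω in s, F i ω ∂μ) l (𝓝 (∫ ω in s, G ω ∂μ)))
    (hX : Integrable X μ) :
    Tendsto (fun i => ∫ ω, F i ω * X ω ∂μ) l (𝓝 (∫ ω, G ω * X ω ∂μ)) := by
  refine Integrable.induction (P := fun X => Tendsto (fun i => ∫ ω, F i ω * X ω ∂μ) l
    (𝓝 (∫ ω, G ω * X ω ∂μ))) (fun c s hs hμs => ?_) (fun X Y _ hX hY ihX ihY => ?_) ?_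
    (fun X Y hXY _ ihX => ?_) hX
  · simp only [← Set.indicator_mul_right, integral_indicator hs, integral_mul_const]
    exact (h s hs hμs).mul_const c
  · simp only [Pi.add_apply, mul_add, integral_add (hX.bdd_mul (hF _) (hFK _))
      (hY.bdd_mul (hF _) (hFK _)), integral_add (hX.bdd_mul hG hGK) (hY.bdd_mul hG hGK)]
    exact ihX.add ihY
  · exact (LipschitzWith.uniformEquicontinuous _ K fun i =>
      lipschitzWith_integral_mul (hF i) (hFK i)).equicontinuous.isClosed_setOfPred_tendsto
        (lipschitzWith_integral_mul hG hGK).continuous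
  · have hcongr (Z : Ω → ℝ) : ∫ ω, Z ω * X ω ∂μ = ∫ ω, Z ω * Y ω ∂μ :=
      integral_congr_ae (EventuallyEq.rfl.mul hXY)
    simpa only [hcongr] using ihX

lemma tendsto_integral_mul_of_tendsto_setIntegral_of_tendsto_eLpNorm {l : Filter ι}
    {F R : ι → Ω → ℝ} {G X : Ω → ℝ}
    (hF : ∀ i, AEStronglyMeasurable (F i) μ) (hFK : ∀ i, ∀ᵐ ω ∂μ, ‖F i ω‖ ≤ K)
    (hG : AEStronglyMeasurable G μ) (hGK : ∀ᵐ ω ∂μ, ‖G ω‖ ≤ K)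
    (h : ∀ s, MeasurableSet s → μ s < ∞ →
      Tendsto (fun i => ∫ ω in s, F i ω ∂μ) l (𝓝 (∫ ω in s, G ω ∂μ)))
    (hR : ∀ i, Integrable (R i) μ) (hX : Integrable X μ)
    (hRX : Tendsto (fun i => eLpNorm (R i - X) 1 μ) l (𝓝 0)) :
    Tendsto (fun i => ∫ ω, F i ω * R i ω ∂μ) l (𝓝 (∫ ω, G ω * X ω ∂μ)) := by
  have hsplit (i : ι) : ∫ ω, F i ω * R i ω ∂μ
      = ∫ ω, F i ω * (R i - X) ω ∂μ + ∫ ω, F i ω * X ω ∂μ := by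
    rw [← integral_add (((hR i).sub hX).bdd_mul (hF i) (hFK i)) (hX.bdd_mul (hF i) (hFK i))]
    simp only [← mul_add, Pi.sub_apply, sub_add_cancel]
  simpa only [hsplit, zero_add] using
    (tendsto_integral_mul_zero_of_tendsto_eLpNorm_zero hFK hRX).add
      (tendsto_integral_mul_of_tendsto_setIntegral hF hFK hG hGK h hX)

end BoundedWeights

section ConditionalExpectation

variable {Ω : Type*} {m m0 : MeasurableSpace Ω} {μ : Measure Ω}

lemma integral_mul_condExp_of_stronglyMeasurable (hm : m ≤ m0) [SigmaFinite (μ.trim hm)]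
    {A B : Ω → ℝ} (hA : StronglyMeasurable[m] A) (hAB : Integrable (A * B) μ)
    (hB : Integrable B μ) : ∫ ω, A ω * (μ[B | m]) ω ∂μ = ∫ ω, A ω * B ω ∂μ :=
  calc ∫ ω, A ω * (μ[B | m]) ω ∂μ
      = ∫ ω, (μ[A * B | m]) ω ∂μ :=
        integral_congr_ae (condExp_mul_of_stronglyMeasurable_left hA hAB hB).symm
    _ = ∫ ω, A ω * B ω ∂μ := integral_condExp hm

lemma condExp_sub_condExp_ae_eq_zero (hm : m ≤ m0) [SigmaFinite (μ.trim hm)] {V : Ω → ℝ}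
    (hV : Integrable V μ) : μ[V - μ[V | m] | m] =ᵐ[μ] 0 := by
  filter_upwards [condExp_sub hV integrable_condExp m] with ω hsub
  rw [hsub, condExp_of_stronglyMeasurable hm stronglyMeasurable_condExp integrable_condExp,
    sub_self, Pi.zero_apply]

lemma condExp_mul_sub_condExp_ae_eq_zero (hm : m ≤ m0) [SigmaFinite (μ.trim hm)] {U V : Ω → ℝ}
    (hU : StronglyMeasurable[m] U) (hV : Integrable V μ)
    (hUV : Integrable (U * (V - μ[V | m])) μ) : μ[U * (V - μ[V | m]) | m] =ᵐ[μ] 0 := by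
  filter_upwards [condExp_mul_of_stronglyMeasurable_left hU hUV (hV.sub integrable_condExp),
    condExp_sub_condExp_ae_eq_zero hm hV] with ω hpull hzero
  rw [hpull, Pi.mul_apply, hzero, Pi.zero_apply, mul_zero]

lemma tendsto_integral_mul_zero_of_condExp_ae_eq_zero [IsFiniteMeasure μ] (ℱ : Filtration ℕ m0)
    {Y : ℕ → Ω → ℝ} {X : Ω → ℝ} {K : ℝ≥0} (hY : ∀ n, StronglyMeasurable[⨆ k, ℱ k] (Y n))
    (hYK : ∀ n, ∀ᵐ ω ∂μ, ‖Y n ω‖ ≤ K) (hY0 : ∀ n, μ[Y n | ℱ n] =ᵐ[μ] 0) (hX : Integrable X μ) :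
    Tendsto (fun n => ∫ ω, Y n ω * X ω ∂μ) atTop (𝓝 0) := by
  have hle : ⨆ k, ℱ k ≤ m0 := iSup_le ℱ.le
  have hYmeas (n : ℕ) : AEStronglyMeasurable (Y n) μ := ((hY n).mono hle).aestronglyMeasurable
  have hproj (n : ℕ) : ∫ ω, Y n ω * X ω ∂μ = ∫ ω, Y n ω * (μ[X | ⨆ k, ℱ k]) ω ∂μ :=
    (integral_mul_condExp_of_stronglyMeasurable hle (hY n)
      (hX.bdd_mul (hYmeas n) (hYK n)) hX).symm
  have horth (n : ℕ) : ∫ ω, Y n ω * (μ[X | ℱ n]) ω ∂μ = 0 :=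
    calc ∫ ω, Y n ω * (μ[X | ℱ n]) ω ∂μ
        = ∫ ω, (μ[X | ℱ n]) ω * Y n ω ∂μ := by simp only [mul_comm]
      _ = ∫ ω, (μ[X | ℱ n]) ω * (μ[Y n | ℱ n]) ω ∂μ :=
        (integral_mul_condExp_of_stronglyMeasurable (ℱ.le n) stronglyMeasurable_condExp
          (integrable_condExp.mul_bdd (hYmeas n) (hYK n))
          (Integrable.of_bound (hYmeas n) K (hYK n))).symm
      _ = 0 := by
        refine integral_eq_zero_of_ae ?_
        filter_upwards [hY0 n] with ω hω
        simp only [hω, Pi.zero_apply, mul_zero]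
  have hcenter (n : ℕ) : ∫ ω, Y n ω * X ω ∂μ
      = - ∫ ω, Y n ω * (μ[X | ℱ n] - μ[X | ⨆ k, ℱ k]) ω ∂μ := by
    simp only [Pi.sub_apply, mul_sub]
    rw [integral_sub (integrable_condExp.bdd_mul (hYmeas n) (hYK n))
      (integrable_condExp.bdd_mul (hYmeas n) (hYK n)), horth, zero_sub, neg_neg, hproj]
  simpa only [hcenter, neg_zero] using
    (tendsto_integral_mul_zero_of_tendsto_eLpNorm_zero hYK (tendsto_eLpNorm_condExp X)).neg

lemma tendsto_integral_mul_sub_condExp_mul_zero [IsFiniteMeasure μ] {ℱ : Filtration ℕ m0}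
    {U V : ℕ → Ω → ℝ} {X : Ω → ℝ} {K L : ℝ≥0} (hU : ∀ n, StronglyMeasurable[ℱ n] (U n))
    (hUK : ∀ n, ∀ᵐ ω ∂μ, ‖U n ω‖ ≤ K) (hV : ∀ n, StronglyMeasurable[⨆ k, ℱ k] (V n))
    (hVL : ∀ n, ∀ᵐ ω ∂μ, ‖V n ω‖ ≤ L) (hX : Integrable X μ) :
    Tendsto (fun n => ∫ ω, (U n * (V n - μ[V n | ℱ n])) ω * X ω ∂μ) atTop (𝓝 0) := by
  have hle : ⨆ k, ℱ k ≤ m0 := iSup_le ℱ.le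
  have hmeas (n : ℕ) : StronglyMeasurable[⨆ k, ℱ k] (U n * (V n - μ[V n | ℱ n])) :=
    ((hU n).mono (le_iSup ℱ n)).mul
      ((hV n).sub (stronglyMeasurable_condExp.mono (le_iSup ℱ n)))
  have hbound (n : ℕ) : ∀ᵐ ω ∂μ, ‖(U n * (V n - μ[V n | ℱ n])) ω‖ ≤ (K * (L + L) : ℝ≥0) := by
    filter_upwards [hUK n, hVL n, ae_bdd_abs_condExp_of_ae_bdd_abs (m := ℱ n) (hVL n)]
      with ω hUω hVω hWω
    simp only [Pi.mul_apply, Pi.sub_apply, norm_mul, NNReal.coe_mul, NNReal.coe_add]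
    gcongr
    exact (norm_sub_le _ _).trans (add_le_add hVω hWω)
  refine tendsto_integral_mul_zero_of_condExp_ae_eq_zero ℱ hmeas hbound (fun n => ?_) hX
  exact condExp_mul_sub_condExp_ae_eq_zero (ℱ.le n) (hU n)
    (.of_bound ((hV n).mono hle).aestronglyMeasurable L (hVL n))
    (.of_bound ((hmeas n).mono hle).aestronglyMeasurable _ (hbound n))

lemma tendsto_setIntegral_mul_of_tendstoInMeasure_condExp [IsFiniteMeasure μ]
    {ℱ : Filtration ℕ m0} {U V : ℕ → Ω → ℝ} {U' V' : Ω → ℝ} {K L : ℝ≥0}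
    (hU : ∀ n, StronglyMeasurable[ℱ n] (U n)) (hUK : ∀ n, ∀ᵐ ω ∂μ, ‖U n ω‖ ≤ K)
    (hU' : AEStronglyMeasurable U' μ) (hUK' : ∀ᵐ ω ∂μ, ‖U' ω‖ ≤ K)
    (hUlim : ∀ s, MeasurableSet s → μ s < ∞ →
      Tendsto (fun n => ∫ ω in s, U n ω ∂μ) atTop (𝓝 (∫ ω in s, U' ω ∂μ)))
    (hV : ∀ n, StronglyMeasurable[⨆ k, ℱ k] (V n)) (hVL : ∀ n, ∀ᵐ ω ∂μ, ‖V n ω‖ ≤ L)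
    (hV' : Integrable V' μ) (hVlim : TendstoInMeasure μ (fun n => μ[V n | ℱ n]) atTop V')
    {H : Set Ω} (hH : MeasurableSet H) :
    Tendsto (fun n => ∫ ω in H, U n ω * V n ω ∂μ) atTop (𝓝 (∫ ω in H, U' ω * V' ω ∂μ)) := by
  have hUmeas (n : ℕ) : AEStronglyMeasurable (U n) μ :=
    ((hU n).mono (ℱ.le n)).aestronglyMeasurable
  have hVint (n : ℕ) : Integrable (V n) μ :=
    .of_bound ((hV n).mono (iSup_le ℱ.le)).aestronglyMeasurable L (hVL n)
  have hL1 := tendsto_eLpNorm_one_of_tendstoInMeasure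
    (fun n => integrable_condExp.aestronglyMeasurable)
    (fun n => ae_bdd_abs_condExp_of_ae_bdd_abs (m := ℱ n) (hVL n))
    (memLp_one_iff_integrable.2 hV') hVlim
  have hcondExp : Tendsto (fun n => ∫ ω in H, U n ω * (μ[V n | ℱ n]) ω ∂μ) atTop
      (𝓝 (∫ ω in H, U' ω * V' ω ∂μ)) := by
    refine tendsto_integral_mul_of_tendsto_setIntegral_of_tendsto_eLpNorm
      (fun n => (hUmeas n).restrict) (fun n => ae_restrict_of_ae (hUK n)) hU'.restrict
      (ae_restrict_of_ae hUK') (fun s hs _ => ?_) (fun n => integrable_condExp.restrict)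
      hV'.restrict (tendsto_of_tendsto_of_tendsto_of_le_of_le tendsto_const_nhds hL1
        (fun _ => zero_le) fun n => eLpNorm_mono_measure _ Measure.restrict_le_self)
    simpa only [Measure.restrict_restrict hs] using
      hUlim (s ∩ H) (hs.inter hH) (measure_lt_top μ _)
  have hcenter : Tendsto (fun n => ∫ ω in H, (U n * (V n - μ[V n | ℱ n])) ω ∂μ)
      atTop (𝓝 0) := by
    simpa only [← Set.indicator_mul_right, integral_indicator hH, mul_one] using
      tendsto_integral_mul_sub_condExp_mul_zero hU hUK hV hVL
        ((integrable_const (1 : ℝ)).indicator hH)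
  have hsplit (n : ℕ) : ∫ ω in H, U n ω * V n ω ∂μ
      = ∫ ω in H, (U n * (V n - μ[V n | ℱ n])) ω ∂μ
        + ∫ ω in H, U n ω * (μ[V n | ℱ n]) ω ∂μ := by
    have hint {B : Ω → ℝ} (hB : Integrable B μ) : IntegrableOn (fun ω => U n ω * B ω) H μ :=
      (hB.bdd_mul (hUmeas n) (hUK n)).integrableOn
    calc ∫ ω in H, U n ω * V n ω ∂μ
        = ∫ ω in H, (U n ω * (V n - μ[V n | ℱ n]) ω + U n ω * (μ[V n | ℱ n]) ω) ∂μ := by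
          simp only [← mul_add, Pi.sub_apply, sub_add_cancel]
      _ = _ := integral_add (hint ((hVint n).sub integrable_condExp)) (hint integrable_condExp)
  simpa only [hsplit, zero_add] using hcenter.add hcondExp

end ConditionalExpectation

section Kernels

variable {Ω S T : Type*} {m0 : MeasurableSpace Ω} {μ : Measure Ω}
  [TopologicalSpace S] [MeasurableSpace S] [TopologicalSpace T] [MeasurableSpace T]

lemma StablyTo.tendsto_setIntegral {C : ℕ → Ω → S} {M : Ω → Measure S} (hC : StablyTo μ C M)
    {H : Set Ω} (hH : MeasurableSet H) (f : S →ᵇ ℝ) :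
    Tendsto (fun n => ∫ ω in H, f (C n ω) ∂μ) atTop (𝓝 (∫ ω in H, ∫ x, f x ∂M ω ∂μ)) := by
  rcases eq_zero_or_pos (μ H) with hμH | hμH
  · simp only [Measure.restrict_eq_zero.2 hμH, integral_zero_measure, tendsto_const_nhds]
  · exact hC H hH hμH f

variable [OpensMeasurableSpace S] [OpensMeasurableSpace T]

lemma integrable_integral_kernel [IsFiniteMeasure μ] (N : Kernel Ω S) [IsMarkovKernel N]
    (f : S →ᵇ ℝ) : Integrable (fun ω => ∫ x, f x ∂N ω) μ :=
  .of_bound f.continuous.measurable.stronglyMeasurable.integral_kernel.aestronglyMeasurable ‖f‖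
    (.of_forall fun ω => f.norm_integral_le_norm (N ω))

lemma StablyTo.tendsto_setIntegral_mul [IsFiniteMeasure μ] {ℱ : Filtration ℕ m0}
    {C : ℕ → Ω → S} {D : ℕ → Ω → T} {M : Kernel Ω S} {N : Kernel Ω T}
    [IsMarkovKernel M] [IsMarkovKernel N] (hC : StablyTo μ C M) (hD : StablyStrongTo μ ℱ D N)
    (hCmeas : ∀ n, Measurable[ℱ n] (C n)) (hDmeas : ∀ n, Measurable[⨆ k, ℱ k] (D n))
    (f : S →ᵇ ℝ) (g : T →ᵇ ℝ) {H : Set Ω} (hH : MeasurableSet H) :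
    Tendsto (fun n => ∫ ω in H, f (C n ω) * g (D n ω) ∂μ) atTop
      (𝓝 (∫ ω in H, (∫ x, f x ∂M ω) * ∫ y, g y ∂N ω ∂μ)) :=
  tendsto_setIntegral_mul_of_tendstoInMeasure_condExp (K := ‖f‖₊) (L := ‖g‖₊)
    (fun n => (f.continuous.measurable.comp (hCmeas n)).stronglyMeasurable)
    (fun _ => .of_forall fun _ => f.norm_coe_le_norm _)
    (integrable_integral_kernel M f).aestronglyMeasurable
    (.of_forall fun ω => f.norm_integral_le_norm (M ω))
    (fun _ hs _ => hC.tendsto_setIntegral hs f)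
    (fun n => (g.continuous.measurable.comp (hDmeas n)).stronglyMeasurable)
    (fun _ => .of_forall fun _ => g.norm_coe_le_norm _)
    (integrable_integral_kernel N g) (hD g) hH

end Kernels

open TopologicalSpace

section ConvergenceDetermining

variable {X ι : Type*} [TopologicalSpace X]

/-- The open sets `{f ≠ 0}` cut out by the `[0, 1]`-valued elements `f` of `A`. If they form a base
of the topology then `A` determines weak convergence. -/
def unitSupports (A : Subalgebra ℝ (X →ᵇ ℝ)) : Set (Set X) :=
  {U | ∃ f ∈ A, (∀ x, f x ∈ Set.Icc 0 1) ∧ Function.support f = U}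

lemma isOpen_of_mem_unitSupports {A : Subalgebra ℝ (X →ᵇ ℝ)} {U : Set X}
    (hU : U ∈ unitSupports A) : IsOpen U := by
  obtain ⟨f, -, -, rfl⟩ := hU
  exact f.continuous.isOpen_support

lemma empty_mem_unitSupports (A : Subalgebra ℝ (X →ᵇ ℝ)) : ∅ ∈ unitSupports A :=
  ⟨0, A.zero_mem, fun _ => Set.left_mem_Icc.2 zero_le_one, Function.support_zero⟩

lemma supClosed_unitSupports (A : Subalgebra ℝ (X →ᵇ ℝ)) : SupClosed (unitSupports A) := by
  rintro _ ⟨f, hf, hf01, rfl⟩ _ ⟨g, hg, hg01, rfl⟩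
  have happly (x : X) : (f + g - f * g) x = f x + g x * (1 - f x) := by
    simp only [BoundedContinuousFunction.coe_sub, BoundedContinuousFunction.coe_add,
      BoundedContinuousFunction.coe_mul, Pi.sub_apply, Pi.add_apply, Pi.mul_apply]
    ring
  have hnonneg (x : X) : 0 ≤ g x * (1 - f x) :=
    mul_nonneg (hg01 x).1 (sub_nonneg.2 (hf01 x).2)
  refine ⟨f + g - f * g, A.sub_mem (A.add_mem hf hg) (A.mul_mem hf hg), fun x => ?_, ?_⟩
  · rw [happly]
    refine ⟨add_nonneg (hf01 x).1 (hnonneg x), ?_⟩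
    linarith [mul_le_of_le_one_left (sub_nonneg.2 (hf01 x).2) (hg01 x).2]
  · ext x
    have hzero : f x + g x * (1 - f x) = 0 ↔ f x = 0 ∧ g x = 0 := by
      rw [add_eq_zero_iff_of_nonneg (hf01 x).1 (hnonneg x)]
      exact and_congr_right fun hfx => by rw [hfx, sub_zero, mul_one]
    rw [Function.mem_support, happly, Ne, hzero, not_and_or]
    rfl

lemma biUnion_mem_unitSupports {A : Subalgebra ℝ (X →ᵇ ℝ)} {T : Finset (Set X)}
    (hT : ∀ U ∈ T, U ∈ unitSupports A) : ⋃ U ∈ T, U ∈ unitSupports A := by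
  simpa only [Set.sSup_eq_sUnion, Set.sUnion_eq_biUnion, Finset.mem_coe] using
    (supClosed_unitSupports A).sSup_mem T.finite_toSet (empty_mem_unitSupports A) hT

lemma one_sub_one_sub_pow_le_indicator_support {Y : Type*} {f : Y → ℝ}
    (hf01 : ∀ x, f x ∈ Set.Icc 0 1) (k : ℕ) (x : Y) :
    1 - (1 - f x) ^ k ≤ (Function.support f).indicator 1 x := by
  by_cases hx : f x = 0
  · rw [Set.indicator_of_notMem (Function.notMem_support.2 hx), hx, sub_zero, one_pow, sub_self]
  · rw [Set.indicator_of_mem (Function.mem_support.2 hx), Pi.one_apply]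
    linarith [pow_nonneg (sub_nonneg.2 (hf01 x).2) k]

lemma tendsto_one_sub_one_sub_pow {Y : Type*} {f : Y → ℝ} (hf01 : ∀ x, f x ∈ Set.Icc 0 1) (x : Y) :
    Tendsto (fun k : ℕ => 1 - (1 - f x) ^ k) atTop (𝓝 ((Function.support f).indicator 1 x)) := by
  by_cases hx : f x = 0
  · simp only [hx, sub_zero, one_pow, sub_self, Function.mem_support, ne_eq, not_true_eq_false,
      not_false_eq_true, Set.indicator_of_notMem, tendsto_const_nhds]
  · have hpos : 0 < f x := (hf01 x).1.lt_of_ne' hx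
    have hpow : Tendsto (fun k : ℕ => (1 - f x) ^ k) atTop (𝓝 0) :=
      tendsto_pow_atTop_nhds_zero_of_lt_one (sub_nonneg.2 (hf01 x).2) (by linarith)
    rw [Set.indicator_of_mem (Function.mem_support.2 hx), Pi.one_apply]
    simpa only [sub_zero] using hpow.const_sub 1

lemma tendsto_integral_one_sub_one_sub_pow {Y : Type*} [MeasurableSpace Y] {ν : Measure Y}
    [IsFiniteMeasure ν] {f : Y → ℝ} (hf : Measurable f) (hf01 : ∀ x, f x ∈ Set.Icc 0 1) :
    Tendsto (fun k : ℕ => ∫ x, (1 - (1 - f x) ^ k) ∂ν) atTop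
      (𝓝 (ν.real (Function.support f))) := by
  rw [← integral_indicator_one (measurableSet_support hf)]
  refine tendsto_integral_of_dominated_convergence (fun _ => 1)
    (fun k => (measurable_const.sub ((measurable_const.sub hf).pow_const k)).aestronglyMeasurable)
    (integrable_const 1) (fun k => .of_forall fun x => ?_)
    (.of_forall (tendsto_one_sub_one_sub_pow hf01))
  have h0 : 0 ≤ (1 - f x) ^ k := pow_nonneg (sub_nonneg.2 (hf01 x).2) k
  have h1 : (1 - f x) ^ k ≤ 1 :=
    pow_le_one₀ (sub_nonneg.2 (hf01 x).2) (sub_le_self 1 (hf01 x).1)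
  rw [Real.norm_of_nonneg (sub_nonneg.2 h1)]
  exact sub_le_self 1 h0

variable [MeasurableSpace X] [OpensMeasurableSpace X] [SecondCountableTopology X]

lemma exists_mem_le_indicator_lt_integral {A : Subalgebra ℝ (X →ᵇ ℝ)}
    (hA : IsTopologicalBasis (unitSupports A)) (ν : ProbabilityMeasure X) {G : Set X}
    (hG : IsOpen G) {r : ℝ≥0} (hr : r < ν G) :
    ∃ h ∈ A, (∀ x, h x ≤ G.indicator 1 x) ∧ r < ∫ x, h x ∂(ν : Measure X) := by
  obtain ⟨T, hTA, hrT, hTG⟩ := ν.exists_lt_measure_biUnion_of_isOpen (S := unitSupports A)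
    (fun U hU x hx => by
      obtain ⟨V, hV, hxV, hVU⟩ := hA.exists_subset_of_mem_open hx hU
      exact ⟨V, hV, (hA.isOpen hV).mem_nhds hxV, hVU⟩) hG hr
  obtain ⟨f, hf, hf01, hfT⟩ := biUnion_mem_unitSupports hTA
  rw [← hfT] at hrT hTG
  obtain ⟨k, hk⟩ := ((tendsto_integral_one_sub_one_sub_pow (ν := (ν : Measure X))
    f.continuous.measurable hf01).eventually_const_lt (NNReal.coe_lt_coe.2 hrT)).exists
  refine ⟨1 - (1 - f) ^ k, A.sub_mem A.one_mem (A.pow_mem (A.sub_mem A.one_mem hf) k),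
    fun x => ?_, hk⟩
  exact (one_sub_one_sub_pow_le_indicator_support hf01 k x).trans
    (Set.indicator_le_indicator_of_subset hTG (fun _ => zero_le_one) x)

theorem tendsto_probabilityMeasure_of_isTopologicalBasis_unitSupports {l : Filter ι}
    [l.IsCountablyGenerated] {A : Subalgebra ℝ (X →ᵇ ℝ)}
    (hA : IsTopologicalBasis (unitSupports A)) {P : ι → ProbabilityMeasure X}
    {Q : ProbabilityMeasure X}
    (h : ∀ f ∈ A, Tendsto (fun i => ∫ x, f x ∂(P i : Measure X)) l
      (𝓝 (∫ x, f x ∂(Q : Measure X)))) : Tendsto P l (𝓝 Q) := by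
  refine tendsto_of_forall_isOpen_le_liminf' fun G hG =>
    ENNReal.le_of_forall_nnreal_lt fun r hr => le_liminf_of_le (by isBoundedDefault) ?_
  obtain ⟨f, hfA, hfG, hrf⟩ := exists_mem_le_indicator_lt_integral hA Q hG (r := r) (by
    rwa [← ENNReal.coe_lt_coe, ProbabilityMeasure.ennreal_coeFn_eq_coeFn_toMeasure])
  filter_upwards [(h f hfA).eventually_const_lt hrf] with i hi
  have hfint : ∫ x, f x ∂(P i : Measure X) ≤ (P i : Measure X).real G := by
    rw [← integral_indicator_one hG.measurableSet]
    exact integral_mono (f.integrable _)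
      ((integrable_const 1).indicator hG.measurableSet) hfG
  rw [← ENNReal.ofReal_coe_nnreal]
  exact ENNReal.ofReal_le_of_le_toReal (hi.le.trans hfint)

end ConvergenceDetermining

section Tensor

variable {X Y ι : Type*} [TopologicalSpace X] [TopologicalSpace Y]

/-- The tensor product `(x, y) ↦ f x * g y` of two test functions, bundled as a homomorphism of
monoids: its range is closed under products, so the linear span of its range is a subalgebra. -/
def tensorHom : (X →ᵇ ℝ) × (Y →ᵇ ℝ) →* (X × Y →ᵇ ℝ) where
  toFun p := p.1.compContinuous ⟨Prod.fst, continuous_fst⟩ *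
    p.2.compContinuous ⟨Prod.snd, continuous_snd⟩
  map_one' := BoundedContinuousFunction.ext fun _ => one_mul 1
  map_mul' p q := BoundedContinuousFunction.ext fun z =>
    mul_mul_mul_comm (p.1 z.1) (q.1 z.1) (p.2 z.2) (q.2 z.2)

@[simp]
lemma tensorHom_apply (f : X →ᵇ ℝ) (g : Y →ᵇ ℝ) (z : X × Y) :
    tensorHom (f, g) z = f z.1 * g z.2 :=
  rfl

/-- The algebraic tensor product of the two spaces of test functions, as the algebra of finite sums
of functions `(x, y) ↦ f x * g y`; it serves to test weak convergence on `X × Y`. -/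
noncomputable def tensorAlgebra (X Y : Type*) [TopologicalSpace X] [TopologicalSpace Y] :
    Subalgebra ℝ (X × Y →ᵇ ℝ) :=
  Algebra.adjoin ℝ (MonoidHom.mrange (tensorHom : (X →ᵇ ℝ) × (Y →ᵇ ℝ) →* (X × Y →ᵇ ℝ)))

lemma tensorHom_mem_tensorAlgebra (f : X →ᵇ ℝ) (g : Y →ᵇ ℝ) :
    tensorHom (f, g) ∈ tensorAlgebra X Y :=
  Algebra.subset_adjoin ⟨(f, g), rfl⟩

lemma exists_unit_bump [CompletelyRegularSpace X] {U : Set X} (hU : IsOpen U) {x : X}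
    (hx : x ∈ U) :
    ∃ f : X →ᵇ ℝ, (∀ y, f y ∈ Set.Icc 0 1) ∧ f x ≠ 0 ∧ Function.support f ⊆ U := by
  obtain ⟨u, hu, hux, huU⟩ := CompletelyRegularSpace.completely_regular_isOpen x U hU hx
  refine ⟨.mkOfBound ⟨fun y => unitInterval.symm (u y), by fun_prop⟩ 1
    fun y z => Real.dist_le_of_mem_Icc_01 (unitInterval.symm (u y)).2 (unitInterval.symm (u z)).2,
    fun y => (unitInterval.symm (u y)).2, ?_, fun y hy => ?_⟩
  · simp [hux]
  · by_contra hyU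
    exact hy (by simp [huU hyU])

lemma isTopologicalBasis_unitSupports_tensorAlgebra [CompletelyRegularSpace X]
    [CompletelyRegularSpace Y] : IsTopologicalBasis (unitSupports (tensorAlgebra X Y)) := by
  refine isTopologicalBasis_of_isOpen_of_nhds (fun _ => isOpen_of_mem_unitSupports)
    fun ⟨x, y⟩ W hxy hW => ?_
  obtain ⟨U, V, hU, hV, hxU, hyV, hUV⟩ := isOpen_prod_iff.1 hW x y hxy
  obtain ⟨f, hf01, hfx, hfU⟩ := exists_unit_bump hU hxU
  obtain ⟨g, hg01, hgy, hgV⟩ := exists_unit_bump hV hyV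
  refine ⟨_, ⟨tensorHom (f, g), tensorHom_mem_tensorAlgebra f g, fun z => ?_, rfl⟩, ?_,
    fun z hz => hUV ⟨hfU (left_ne_zero_of_mul hz), hgV (right_ne_zero_of_mul hz)⟩⟩
  · exact unitInterval.mul_mem (hf01 z.1) (hg01 z.2)
  · exact mul_ne_zero hfx hgy

variable [MeasurableSpace X] [MeasurableSpace Y] [OpensMeasurableSpace (X × Y)]

lemma tendsto_integral_of_mem_tensorAlgebra {l : Filter ι} {P : ι → Measure (X × Y)}
    {Q : Measure (X × Y)} [∀ i, IsFiniteMeasure (P i)] [IsFiniteMeasure Q]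
    (h : ∀ (f : X →ᵇ ℝ) (g : Y →ᵇ ℝ),
      Tendsto (fun i => ∫ z, f z.1 * g z.2 ∂P i) l (𝓝 (∫ z, f z.1 * g z.2 ∂Q)))
    {F : X × Y →ᵇ ℝ} (hF : F ∈ tensorAlgebra X Y) :
    Tendsto (fun i => ∫ z, F z ∂P i) l (𝓝 (∫ z, F z ∂Q)) := by
  rw [tensorAlgebra, ← Subalgebra.mem_toSubmodule, Algebra.adjoin_eq_span,
    Submonoid.closure_eq] at hF
  induction hF using Submodule.span_induction with
  | mem F hF =>
    obtain ⟨⟨f, g⟩, rfl⟩ := hF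
    exact h f g
  | zero => simpa using tendsto_const_nhds
  | add F G _ _ ihF ihG =>
    simp only [BoundedContinuousFunction.coe_add, Pi.add_apply,
      integral_add (F.integrable _) (G.integrable _)]
    exact ihF.add ihG
  | smul c F _ ihF =>
    simp only [BoundedContinuousFunction.coe_smul, integral_smul]
    exact ihF.const_smul c

theorem tendsto_probabilityMeasure_of_tendsto_integral_mul [CompletelyRegularSpace X]
    [CompletelyRegularSpace Y] [SecondCountableTopology X] [SecondCountableTopology Y]
    {l : Filter ι} [l.IsCountablyGenerated]
    {P : ι → ProbabilityMeasure (X × Y)} {Q : ProbabilityMeasure (X × Y)}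
    (h : ∀ (f : X →ᵇ ℝ) (g : Y →ᵇ ℝ),
      Tendsto (fun i => ∫ z, f z.1 * g z.2 ∂(P i : Measure (X × Y))) l
        (𝓝 (∫ z, f z.1 * g z.2 ∂(Q : Measure (X × Y))))) : Tendsto P l (𝓝 Q) :=
  tendsto_probabilityMeasure_of_isTopologicalBasis_unitSupports
    isTopologicalBasis_unitSupports_tensorAlgebra
    fun _ hF => tendsto_integral_of_mem_tensorAlgebra h hF

end Tensor

section ConditionalLaws

variable {Ω S : Type*} {m0 : MeasurableSpace Ω} {μ : Measure Ω} [MeasurableSpace S]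

lemma integral_cond (H : Set Ω) (f : Ω → ℝ) :
    ∫ ω, f ω ∂μ[|H] = (μ.real H)⁻¹ * ∫ ω in H, f ω ∂μ := by
  rw [ProbabilityTheory.cond, integral_smul_measure, ENNReal.toReal_inv, smul_eq_mul, Measure.real]

variable [TopologicalSpace S] [OpensMeasurableSpace S]

lemma integral_map_cond {Y : Ω → S} (hY : Measurable Y) (H : Set Ω) (f : S →ᵇ ℝ) :
    ∫ x, f x ∂(μ[|H]).map Y = (μ.real H)⁻¹ * ∫ ω in H, f (Y ω) ∂μ := by
  rw [integral_map hY.aemeasurable f.continuous.measurable.aestronglyMeasurable, integral_cond]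

lemma integral_comp_cond (κ : Kernel Ω S) [IsMarkovKernel κ] (H : Set Ω)
    (f : S →ᵇ ℝ) :
    ∫ x, f x ∂(κ ∘ₘ μ[|H]) = (μ.real H)⁻¹ * ∫ ω in H, ∫ x, f x ∂κ ω ∂μ := by
  rw [Measure.comp_eq_comp_const_apply, Kernel.integral_comp (f.integrable _), Kernel.const_apply,
    integral_cond]

variable {T : Type*} [MeasurableSpace T] [TopologicalSpace T] [OpensMeasurableSpace T]
  [SecondCountableTopology S] [SecondCountableTopology T]
  [CompletelyRegularSpace S] [CompletelyRegularSpace T]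

lemma stablyTo_of_tendsto_setIntegral_mul [IsFiniteMeasure μ] {Y : ℕ → Ω → S × T}
    {κ : Kernel Ω (S × T)} [IsMarkovKernel κ] (hY : ∀ n, Measurable (Y n))
    (h : ∀ H, MeasurableSet H → ∀ (f : S →ᵇ ℝ) (g : T →ᵇ ℝ),
      Tendsto (fun n => ∫ ω in H, f (Y n ω).1 * g (Y n ω).2 ∂μ) atTop
        (𝓝 (∫ ω in H, ∫ z, f z.1 * g z.2 ∂κ ω ∂μ))) : StablyTo μ Y κ := by
  intro H hH hμH F
  have : IsProbabilityMeasure (μ[|H]) := cond_isProbabilityMeasure hμH.ne'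
  let P (n : ℕ) : ProbabilityMeasure (S × T) :=
    ⟨(μ[|H]).map (Y n), Measure.isProbabilityMeasure_map (hY n).aemeasurable⟩
  let Q : ProbabilityMeasure (S × T) := ⟨κ ∘ₘ μ[|H], inferInstance⟩
  have hP (n : ℕ) (G : S × T →ᵇ ℝ) :
      ∫ z, G z ∂(P n : Measure (S × T)) = (μ.real H)⁻¹ * ∫ ω in H, G (Y n ω) ∂μ :=
    integral_map_cond (hY n) H G
  have hQ (G : S × T →ᵇ ℝ) :
      ∫ z, G z ∂(Q : Measure (S × T)) = (μ.real H)⁻¹ * ∫ ω in H, ∫ z, G z ∂κ ω ∂μ :=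
    integral_comp_cond κ H G
  have hPQ : Tendsto P atTop (𝓝 Q) := by
    refine tendsto_probabilityMeasure_of_tendsto_integral_mul fun f g => ?_
    simp only [← tensorHom_apply, hP, hQ]
    exact (h H hH f g).const_mul _
  have hF := ProbabilityMeasure.tendsto_iff_forall_integral_tendsto.1 hPQ F
  simp only [hP, hQ] at hF
  have hne : (μ.real H)⁻¹ ≠ 0 := inv_ne_zero ((measureReal_ne_zero_iff).2 hμH.ne')
  exact (tendsto_const_smul_iff₀ hne).1 hF

end ConditionalLaws

theorem stmt3_general {Ω S T : Type*} {m0 : MeasurableSpace Ω} {μ : Measure Ω} [IsFiniteMeasure μ]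
    [TopologicalSpace S] [SecondCountableTopology S] [CompletelyRegularSpace S]
    [MeasurableSpace S] [OpensMeasurableSpace S]
    [TopologicalSpace T] [SecondCountableTopology T] [CompletelyRegularSpace T]
    [MeasurableSpace T] [OpensMeasurableSpace T]
    {ℱ : Filtration ℕ m0} {C : ℕ → Ω → S} {D : ℕ → Ω → T} {M : Kernel Ω S} {N : Kernel Ω T}
    [IsMarkovKernel M] [IsMarkovKernel N]
    (hCmeas : ∀ n, Measurable[ℱ n] (C n)) (hDmeas : ∀ n, Measurable[⨆ k, ℱ k] (D n))
    (hC : StablyTo μ C M) (hD : StablyStrongTo μ ℱ D N) :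
    StablyTo μ (fun n ω => (C n ω, D n ω)) fun ω => (M ω).prod (N ω) := by
  have hCD (n : ℕ) : Measurable fun ω => (C n ω, D n ω) :=
    ((hCmeas n).mono (ℱ.le n) le_rfl).prodMk ((hDmeas n).mono (iSup_le ℱ.le) le_rfl)
  simp only [← Kernel.prod_apply]
  refine stablyTo_of_tendsto_setIntegral_mul hCD fun H hH f g => ?_
  simpa only [Kernel.prod_apply, integral_prod_mul] using
    hC.tendsto_setIntegral_mul hD hCmeas hDmeas f g hH

theorem stmt3
    {Ω : Type*} {m0 : MeasurableSpace Ω} {μ : Measure Ω} [IsProbabilityMeasure μ]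
    {S : Type*} [MetricSpace S] [TopologicalSpace.SeparableSpace S]
    [MeasurableSpace S] [BorelSpace S]
    (𝒢 : ℕ → MeasurableSpace Ω) (h𝒢mono : Monotone 𝒢) (h𝒢le : ∀ n, 𝒢 n ≤ m0)
    (C D : ℕ → Ω → S) (M N : Ω → Measure S)
    (hMkernel : Measurable M) (hNkernel : Measurable N)
    (hMprob : ∀ ω, IsProbabilityMeasure (M ω)) (hNprob : ∀ ω, IsProbabilityMeasure (N ω))
    (hCmeas : ∀ n, Measurable[𝒢 n] (C n))
    (hDmeas : ∀ n, Measurable[⨆ k, 𝒢 k] (D n))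
    (hC : StablyTo μ C M)
    (hD : StablyStrongTo μ 𝒢 D N) :
    StablyTo μ (fun n ω => (C n ω, D n ω)) (fun ω => (M ω).prod (N ω)) := by
  have : SecondCountableTopology S := UniformSpace.secondCountable_of_separable S
  have : IsMarkovKernel (⟨M, hMkernel⟩ : Kernel Ω S) := ⟨hMprob⟩
  have : IsMarkovKernel (⟨N, hNkernel⟩ : Kernel Ω S) := ⟨hNprob⟩
  exact stmt3_general (ℱ := ⟨𝒢, h𝒢mono, h𝒢le⟩) (M := ⟨M, hMkernel⟩) (N := ⟨N, hNkernel⟩)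
    hCmeas hDmeas hC hD
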